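/- arXiv:1602.08610 — 2 statements merged into one kernel-verified Lean document; each statement's English description precedes it below -/
import Mathlib

section
/- For all natural numbers α ≥ 1, a ≥ 1, and b ≥ 1, one has (a+b+α−1)! · (α−1)! / (a+b+2α−1)! > [(a+α−1)! · (α−1)! / (a+2α−1)!] · [(b+α−1)! · (α−1)! / (b+2α−1)!]; equivalently, (a+b+α−1)! · (a+2α−1)! · (b+2α−1)! > (a+b+2α−1)! · (a+α−1)! · (b+α−1)! · (α−1)!. -/
/-!
The likelihood `f n = (n + α - 1)! (α - 1)! / (n + 2α - 1)!` has ratios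
`f (n + 1) / f n = (n + α) / (n + 2α)` strictly increasing in `n`, so
`f a * f b < f 0 * f (a + b)` for `a, b ≥ 1`; and `f 0 ≤ 1`.
-/

open Nat

lemma ascFactorial_mul_ascFactorial_add_lt {x y a b : ℕ} (hxy : x < y) (ha : 0 < a)
    (hb : 0 < b) :
    x.ascFactorial b * (y + a).ascFactorial b < (x + a).ascFactorial b * y.ascFactorial b := by
  have factor_lt (i : ℕ) : (x + i) * (y + a + i) < (x + a + i) * (y + i) := by
    have : x * a < y * a := Nat.mul_lt_mul_of_pos_right hxy ha
    linarith
  induction b, hb using Nat.le_induction with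
  | base => simpa [Nat.ascFactorial_succ] using factor_lt 0
  | succ b _ ih =>
    simp only [Nat.ascFactorial_succ]
    rw [mul_mul_mul_comm, mul_mul_mul_comm (x + a + b)]
    exact Nat.mul_lt_mul'' (factor_lt b) ih

lemma factorial_add_mul_factorial_add_lt {k l a b : ℕ} (hkl : k < l) (ha : 0 < a)
    (hb : 0 < b) :
    (k + a)! * (k + b)! * ((l + a + b)! * l !) < (k + a + b)! * k ! * ((l + a)! * (l + b)!) := by
  have hasc := ascFactorial_mul_ascFactorial_add_lt (Nat.succ_lt_succ hkl) ha hb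
  rw [Nat.succ_add, Nat.succ_add] at hasc
  simp only [← Nat.factorial_mul_ascFactorial _ b]
  calc
    _ = (k + a)! * k ! * ((l + a)! * l !) *
          ((k + 1).ascFactorial b * (l + a + 1).ascFactorial b) := by ring
    _ < (k + a)! * k ! * ((l + a)! * l !) *
          ((k + a + 1).ascFactorial b * (l + 1).ascFactorial b) :=
        Nat.mul_lt_mul_of_pos_left hasc (by positivity)
    _ = _ := by ring

/-- The case of a `Beta(α, β)` prior, with `α` the pseudo-count of the captured label. -/
theorem consolidate_perfect_rules_increases_likelihood_general {α β a b : ℕ}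
    (hα : 1 ≤ α) (hβ : 1 ≤ β) (ha : 1 ≤ a) (hb : 1 ≤ b) :
    (a + b + (α + β) - 1)! * (a + α - 1)! * (b + α - 1)! * (β - 1)!
      < (a + b + α - 1)! * (a + (α + β) - 1)! * (b + (α + β) - 1)! := by
  obtain ⟨k, rfl⟩ := Nat.exists_eq_add_of_le' hα
  obtain ⟨m, rfl⟩ := Nat.exists_eq_add_of_le' hβ
  obtain ⟨l, hl⟩ : ∃ l, l = k + m + 1 := ⟨_, rfl⟩
  have hprior : k ! * m ! ≤ l ! :=
    (Nat.le_of_dvd (Nat.factorial_pos _) (Nat.factorial_mul_factorial_dvd_factorial_add k m)).trans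
      (Nat.factorial_le (by lia))
  have hconvex := factorial_add_mul_factorial_add_lt (by lia : k < l) ha hb
  rw [show a + b + (k + 1 + (m + 1)) - 1 = l + a + b by lia, show a + (k + 1) - 1 = k + a by lia,
    show b + (k + 1) - 1 = k + b by lia, show a + b + (k + 1) - 1 = k + a + b by lia,
    show a + (k + 1 + (m + 1)) - 1 = l + a by lia, show b + (k + 1 + (m + 1)) - 1 = l + b by lia,
    Nat.add_sub_cancel]
  refine Nat.lt_of_mul_lt_mul_right (a := l !) ?_
  calc
    _ = (k + a)! * (k + b)! * ((l + a + b)! * l !) * m ! := by ring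
    _ < (k + a + b)! * k ! * ((l + a)! * (l + b)!) * m ! :=
        Nat.mul_lt_mul_of_pos_right hconvex (Nat.factorial_pos m)
    _ = (k + a + b)! * (l + a)! * (l + b)! * (k ! * m !) := by ring
    _ ≤ (k + a + b)! * (l + a)! * (l + b)! * l ! := Nat.mul_le_mul_left _ hprior

/-- Lemma 2 of the paper (factorial form): consolidating two perfect rules with
the same label, capturing `a` and `b` observations respectively, into a single
perfect rule capturing all `a+b` observations strictly increases the
likelihood.  Equivalently,
`(a+b+α−1)! · (a+2α−1)! · (b+2α−1)! > (a+b+2α−1)! · (a+α−1)! · (b+α−1)! · (α−1)!`. -/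
theorem consolidate_perfect_rules_increases_likelihood (α a b : ℕ)
    (hα : 1 ≤ α) (ha : 1 ≤ a) (hb : 1 ≤ b) :
    (a + b + 2 * α - 1)! * (a + α - 1)! * (b + α - 1)! * (α - 1)!
      < (a + b + α - 1)! * (a + 2 * α - 1)! * (b + 2 * α - 1)! := by
  simpa only [two_mul] using
    consolidate_perfect_rules_increases_likelihood_general hα hα ha hb
end

section
/- For all natural numbers α ≥ 1, a ≥ 1, and b ≥ 1, one has (a+b+α−1)! · (α−1)! / (a+b+2α−1)! > [(a+α−1)! · (α−1)! / (a+2α−1)!] · [(b+α−1)! · (α−1)! / (b+2α−1)!] · (2α−1)!/((α−1)!)²; that is, the likelihood ratio for consolidating two perfect rules exceeds Γ(2α)/Γ(α)². -/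
open Nat

/-!
With separate prior parameters `α` and `β`, the likelihood of a perfect rule capturing `n`
observations is `L n = (β-1)! / ((n+α)(n+α+1)⋯(n+α+β-1))`, and the constant
`(α+β-1)! / ((α-1)! (β-1)!)` is `1 / L 0`, so the claim reads `L a * L b < L 0 * L (a+b)`.
It holds factor by factor in the denominators, since `x (x+a+b) < (x+a) (x+b)` when `a, b > 0`.
-/

section Pochhammer

open Polynomial

section Ordered

variable {R : Type*} [CommSemiring R] [PartialOrder R] [IsStrictOrderedRing R] {a b : R}

lemma mul_add_add_lt_add_mul_add (x : R) (ha : 0 < a) (hb : 0 < b) :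
    x * (x + a + b) < (x + a) * (x + b) :=
  calc x * (x + a + b) < x * (x + a + b) + a * b := lt_add_of_pos_right _ (mul_pos ha hb)
    _ = (x + a) * (x + b) := by ring

lemma ascPochhammer_eval_nonneg {x : R} (k : ℕ) (hx : 0 ≤ x) : 0 ≤ (ascPochhammer R k).eval x := by
  induction k with
  | zero => simp
  | succ k ih =>
    rw [ascPochhammer_succ_eval]
    positivity

lemma ascPochhammer_eval_mul_eval_add_add_lt {x : R} (hx : 0 ≤ x) (ha : 0 < a) (hb : 0 < b)
    {k : ℕ} (hk : 1 ≤ k) :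
    (ascPochhammer R k).eval x * (ascPochhammer R k).eval (x + a + b) <
      (ascPochhammer R k).eval (x + a) * (ascPochhammer R k).eval (x + b) := by
  induction k, hk using Nat.le_induction with
  | base => simpa using mul_add_add_lt_add_mul_add x ha hb
  | succ k _ ih =>
    have factor_lt : (x + k) * (x + a + b + k) < (x + a + k) * (x + b + k) := by
      simpa only [add_right_comm _ _ (k : R)] using mul_add_add_lt_add_mul_add (x + k) ha hb
    simp only [ascPochhammer_succ_eval]
    rw [mul_mul_mul_comm, mul_mul_mul_comm (eval (x + a) _)]
    have eval_nonneg := ascPochhammer_eval_nonneg k hx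
    have eval_add_add_nonneg := ascPochhammer_eval_nonneg k (show 0 ≤ x + a + b by positivity)
    exact mul_lt_mul'' ih factor_lt (by positivity) (by positivity)

end Ordered

lemma factorial_pred_div_factorial_add_pred (K : Type*) [Semifield K] [CharZero K]
    {m : ℕ} (hm : 1 ≤ m) (k : ℕ) :
    ((m - 1)! : K) / (m + k - 1)! = ((ascPochhammer K k).eval (m : K))⁻¹ := by
  obtain ⟨m, rfl⟩ := Nat.exists_eq_add_of_le' hm
  have factorial_ne_zero : (m ! : K) ≠ 0 := Nat.cast_ne_zero.2 m.factorial_ne_zero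
  rw [Nat.add_sub_cancel, Nat.add_right_comm, Nat.add_sub_cancel, ← factorial_mul_ascPochhammer,
    Nat.cast_succ, div_mul_cancel_left₀ factorial_ne_zero]

end Pochhammer

/-- The Beta–Binomial likelihood, under a Beta prior with positive integer parameters `α` and `β`,
of a perfect rule capturing `n` observations, all of the label to which `α` belongs. -/
noncomputable def perfectRuleLikelihood (α β n : ℕ) : ℝ :=
  ((n + α - 1)! * (β - 1)! : ℝ) / (n + α + β - 1)!

lemma perfectRuleLikelihood_eq_div_ascPochhammer {α : ℕ} (hα : 1 ≤ α) (β n : ℕ) :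
    perfectRuleLikelihood α β n = (β - 1)! / (ascPochhammer ℝ β).eval (α + n : ℝ) := by
  rw [perfectRuleLikelihood, mul_div_right_comm, factorial_pred_div_factorial_add_pred ℝ (by omega),
    inv_mul_eq_div, Nat.cast_add, add_comm (n : ℝ)]

lemma perfectRuleLikelihood_pos (α β n : ℕ) : 0 < perfectRuleLikelihood α β n := by
  unfold perfectRuleLikelihood
  positivity

lemma inv_perfectRuleLikelihood_zero (α β : ℕ) :
    (perfectRuleLikelihood α β 0)⁻¹ = (α + β - 1)! / ((α - 1)! * (β - 1)!) := by
  rw [perfectRuleLikelihood, inv_div, Nat.zero_add]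

lemma perfectRuleLikelihood_mul_lt {α β a b : ℕ} (hα : 1 ≤ α) (hβ : 1 ≤ β)
    (ha : 1 ≤ a) (hb : 1 ≤ b) :
    perfectRuleLikelihood α β a * perfectRuleLikelihood α β b <
      perfectRuleLikelihood α β 0 * perfectRuleLikelihood α β (a + b) := by
  have hα₀ : (0 : ℝ) < α := Nat.cast_pos.2 hα
  have denominators_lt := ascPochhammer_eval_mul_eval_add_add_lt hα₀.le
    (Nat.cast_pos.2 ha) (Nat.cast_pos.2 hb) hβ
  have denominators_pos := mul_pos (ascPochhammer_pos β (α : ℝ) hα₀)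
    (ascPochhammer_pos β (α + a + b : ℝ) (by positivity))
  simp only [perfectRuleLikelihood_eq_div_ascPochhammer hα, _root_.div_mul_div_comm, Nat.cast_add,
    Nat.cast_zero, add_zero, ← add_assoc]
  exact div_lt_div_of_pos_left (by positivity) denominators_pos denominators_lt

theorem consolidation_likelihood_ratio_bound_general {α β a b : ℕ}
    (hα : 1 ≤ α) (hβ : 1 ≤ β) (ha : 1 ≤ a) (hb : 1 ≤ b) :
    perfectRuleLikelihood α β (a + b) >
      perfectRuleLikelihood α β a * perfectRuleLikelihood α β b *
        ((α + β - 1)! / ((α - 1)! * (β - 1)!)) := by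
  rw [← inv_perfectRuleLikelihood_zero, ← div_eq_mul_inv, gt_iff_lt,
    div_lt_iff₀' (perfectRuleLikelihood_pos α β 0)]
  exact perfectRuleLikelihood_mul_lt hα hβ ha hb

/-- The quantitative bound inside the proof of Lemma 2: the likelihood ratio
for consolidating two perfect rules (with positive-integer prior parameter `α`)
exceeds `Γ(2α)/Γ(α)² = (2α−1)!/((α−1)!)²`. -/
theorem consolidation_likelihood_ratio_bound (α a b : ℕ)
    (hα : 1 ≤ α) (ha : 1 ≤ a) (hb : 1 ≤ b) :
    ((a + b + α - 1)! * (α - 1)! : ℝ) / (a + b + 2 * α - 1)!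
      > (((a + α - 1)! * (α - 1)! : ℝ) / (a + 2 * α - 1)!)
        * (((b + α - 1)! * (α - 1)! : ℝ) / (b + 2 * α - 1)!)
        * (((2 * α - 1)! : ℝ) / ((α - 1)! : ℝ) ^ 2) := by
  simpa only [perfectRuleLikelihood, ← add_assoc, two_mul, sq] using
    consolidation_likelihood_ratio_bound_general hα hα ha hb
end
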